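/- Let K ⊂ ℝ³ be a convex body and let p be a point in its interior. If every 2-dimensional plane section of K through p is a planar convex set of constant width 1, then K is a closed Euclidean ball of diameter 1 centered at p. -/

import Mathlib

/-!
Any two points of `K` lie in a plane through `p`, and a planar section of constant width `1` has
diameter at most `1`; hence `K` has diameter at most `1` (`dist_le_one`). In a unit direction `u`,
each plane through `p` parallel to `u` therefore contains a pair `x, x - u` of points of `K`, and
the diameter bound makes this pair independent of the plane. Lying in all those planes, `x` is on
the line `p + ℝ u` (`exists_radial`): `x = p + r(u) u`, and `r(u)` is the support function of `K`
relative to `p`.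

Since `p + r(v) v` belongs to `K`, `r(v) ⟪u, v⟫ ≤ r(u)` for all unit `u, v`. Along a great circle
this gives `|f s - f t| ≤ (s - t)²` for `f = r ∘ c`, so `f` is constant (`const_of_sq_bound`) and
`r(u) = r(-u) = 1 - r(u)`, i.e. `r(u) = 1/2`: both the support function and the radial function of
`K` at `p` equal `1/2`.
-/

open Metric Set
open scoped RealInnerProductSpace

noncomputable section

abbrev E3 := EuclideanSpace ℝ (Fin 3)

/-- The plane `{x | ⟪w, x⟫ = d}` with normal vector `w`. -/
def planeEq (w : E3) (d : ℝ) : Set E3 := {x | ⟪w, x⟫ = d}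

/-- The plane `{x | ⟪w, x⟫ = d}` supports `L`: it meets `L` and `L` lies in one of
the closed half-spaces it bounds. -/
def PlaneSupports (L : Set E3) (w : E3) (d : ℝ) : Prop :=
  (planeEq w d ∩ L).Nonempty ∧ ∀ y ∈ L, ⟪w, y⟫ ≤ d

/-- The width of a set `S` in direction `w'`. -/
def widthIn (S : Set E3) (w' : E3) : ℝ :=
  sSup ((fun x => ⟪x, w'⟫) '' S) - sInf ((fun x => ⟪x, w'⟫) '' S)

/-- A subset of the plane with normal `w` has constant width `h` if its width equals
`h` in every unit direction parallel to the plane. -/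
def HasConstWidthIn (S : Set E3) (w : E3) (h : ℝ) : Prop :=
  ∀ w' : E3, ‖w'‖ = 1 → ⟪w', w⟫ = 0 → widthIn S w' = h

/-- A function on the line that is Hölder of exponent `2` has zero derivative, hence is constant. -/
lemma const_of_sq_bound (f : ℝ → ℝ) (h : ∀ s t, |f s - f t| ≤ (s - t) ^ 2) (a b : ℝ) :
    f a = f b := by
  have hd : ∀ t, HasDerivAt f 0 t := by
    intro t
    rw [hasDerivAt_iff_isLittleO]
    have h1 : (fun s : ℝ => f s - f t - (s - t) • (0 : ℝ)) =O[nhds t] fun s => (s - t) ^ 2 := by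
      refine Asymptotics.IsBigO.of_bound 1 (Filter.Eventually.of_forall fun s => ?_)
      have := h s t
      simpa using this
    refine h1.trans_isLittleO ?_
    have h2 := Asymptotics.isLittleO_pow_sub_sub t (m := 2) (by norm_num)
    simpa using h2
  exact is_const_of_deriv_eq_zero (fun t => (hd t).differentiableAt) (fun t => (hd t).deriv) a b

lemma exists_unit_orthogonal (x y : E3) : ∃ w : E3, ‖w‖ = 1 ∧ ⟪w, x⟫ = 0 ∧ ⟪w, y⟫ = 0 := by
  classical
  have hlt : Module.finrank ℝ (Submodule.span ℝ ({x, y} : Set E3)) < Module.finrank ℝ E3 := by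
    have h1 := finrank_span_finset_le_card (R := ℝ) ({x, y} : Finset E3)
    have h2 : ({x, y} : Finset E3).card ≤ 2 := Finset.card_le_two
    have h3 : Module.finrank ℝ E3 = 3 := by simp
    have h4 : ((({x, y} : Finset E3)) : Set E3) = {x, y} := by simp
    rw [Set.finrank, h4] at h1
    omega
  have hne : (Submodule.span ℝ ({x, y} : Set E3))ᗮ ≠ ⊥ := by
    intro h
    rw [Submodule.orthogonal_eq_bot_iff] at h
    rw [h, finrank_top] at hlt
    exact lt_irrefl _ hlt
  obtain ⟨v, hv, hv0⟩ := Submodule.exists_mem_ne_zero_of_ne_bot hne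
  rw [Submodule.mem_orthogonal'] at hv
  have hx := hv x (Submodule.subset_span (by simp))
  have hy := hv y (Submodule.subset_span (by simp))
  refine ⟨‖v‖⁻¹ • v, norm_smul_inv_norm hv0, ?_, ?_⟩
  · rw [real_inner_smul_left, hx, mul_zero]
  · rw [real_inner_smul_left, hy, mul_zero]

section Body

variable {K : Set E3} {p : E3}

lemma isCompact_section (hK : IsCompact K) (w : E3) (d : ℝ) : IsCompact (planeEq w d ∩ K) := by
  refine hK.inter_left ?_
  exact isClosed_eq (by fun_prop) continuous_const

lemma dist_le_one (hK : IsCompact K)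
    (hwidth : ∀ w : E3, ‖w‖ = 1 → HasConstWidthIn (planeEq w ⟪w, p⟫ ∩ K) w 1)
    {x y : E3} (hx : x ∈ K) (hy : y ∈ K) : ‖x - y‖ ≤ 1 := by
  by_cases hxy : x - y = 0
  · simp [hxy]
  obtain ⟨w, hw, h1, h2⟩ := exists_unit_orthogonal (x - p) (y - p)
  rw [inner_sub_right] at h1 h2
  have horth : ⟪‖x - y‖⁻¹ • (x - y), w⟫ = 0 := by
    rw [real_inner_smul_left, real_inner_comm, inner_sub_right]
    rw [show ⟪w, x⟫ - ⟪w, y⟫ = 0 by linarith, mul_zero]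
  have hW := hwidth w hw (‖x - y‖⁻¹ • (x - y)) (norm_smul_inv_norm hxy) horth
  set u := ‖x - y‖⁻¹ • (x - y) with hu
  have hc : IsCompact ((fun z => ⟪z, u⟫) '' (planeEq w ⟪w, p⟫ ∩ K)) :=
    (isCompact_section hK w _).image (by fun_prop)
  have hsx := le_csSup hc.bddAbove (mem_image_of_mem (fun z => ⟪z, u⟫)
    (show x ∈ planeEq w ⟪w, p⟫ ∩ K from ⟨sub_eq_zero.1 h1, hx⟩))
  have hsy := csInf_le hc.bddBelow (mem_image_of_mem (fun z => ⟪z, u⟫)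
    (show y ∈ planeEq w ⟪w, p⟫ ∩ K from ⟨sub_eq_zero.1 h2, hy⟩))
  have hn : ⟪x - y, u⟫ = ‖x - y‖ := by
    rw [hu, real_inner_smul_right, real_inner_self_eq_norm_sq]
    have := norm_ne_zero_iff.2 hxy
    field_simp
  rw [inner_sub_left] at hn
  unfold widthIn at hW
  linarith

/-- If `a` has length at most `1` and a component `1` along the unit vector `u`, then `a = u`. -/
lemma eq_of_inner_eq_one {a u : E3} (hu : ‖u‖ = 1) (ha : ‖a‖ ≤ 1) (h : ⟪a, u⟫ = 1) : a = u := by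
  have h1 : ‖a - u‖ ^ 2 ≤ 0 := by
    rw [norm_sub_sq_real, h, hu]
    nlinarith [norm_nonneg a]
  have h2 : ‖a - u‖ = 0 := by nlinarith [norm_nonneg (a - u)]
  exact sub_eq_zero.1 (norm_eq_zero.1 h2)

lemma exists_pair (hK : IsCompact K) (hp : p ∈ K)
    (hwidth : ∀ w : E3, ‖w‖ = 1 → HasConstWidthIn (planeEq w ⟪w, p⟫ ∩ K) w 1)
    {u w : E3} (hu : ‖u‖ = 1) (hw : ‖w‖ = 1) (huw : ⟪u, w⟫ = 0) :
    ∃ x ∈ K, x - u ∈ K ∧ ⟪w, x - p⟫ = 0 := by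
  have hW := hwidth w hw u hu huw
  have hc : IsCompact ((fun z => ⟪z, u⟫) '' (planeEq w ⟪w, p⟫ ∩ K)) :=
    (isCompact_section hK w _).image (by fun_prop)
  have hne : ((fun z => ⟪z, u⟫) '' (planeEq w ⟪w, p⟫ ∩ K)).Nonempty :=
    ⟨_, mem_image_of_mem _ (show p ∈ _ from ⟨rfl, hp⟩)⟩
  obtain ⟨x, ⟨hxw, hx⟩, hxs⟩ := hc.sSup_mem hne
  obtain ⟨y, ⟨-, hy⟩, hys⟩ := hc.sInf_mem hne
  have hxw' : ⟪w, x⟫ = ⟪w, p⟫ := hxw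
  have h1 : ⟪x - y, u⟫ = 1 := by
    rw [inner_sub_left]
    unfold widthIn at hW
    simp only at hxs hys
    rw [hxs, hys, hW]
  have h2 := eq_of_inner_eq_one hu (dist_le_one hK hwidth hx hy) h1
  refine ⟨x, hx, ?_, by rw [inner_sub_right, hxw', sub_self]⟩
  rw [← h2, sub_sub_cancel]
  exact hy

lemma exists_radial (hK : IsCompact K) (hp : p ∈ K)
    (hwidth : ∀ w : E3, ‖w‖ = 1 → HasConstWidthIn (planeEq w ⟪w, p⟫ ∩ K) w 1)
    (u : E3) (hu : ‖u‖ = 1) : ∃ r : ℝ, p + r • u ∈ K ∧ p + (r - 1) • u ∈ K := by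
  obtain ⟨w₀, hw₀, h0, -⟩ := exists_unit_orthogonal u u
  obtain ⟨x, hx, hxu, -⟩ := exists_pair hK hp hwidth hu hw₀ (by rw [real_inner_comm]; exact h0)
  -- by the parallelogram identity `x` is the only point with `x, x - u ∈ K`
  have huniq : ∀ y ∈ K, y - u ∈ K → y = x := by
    intro y hy hyu
    have h1 := dist_le_one hK hwidth hx hyu
    have h2 := dist_le_one hK hwidth hy hxu
    have e1 : x - (y - u) = u + (x - y) := by abel
    have e2 : y - (x - u) = u - (x - y) := by abel
    rw [e1] at h1
    rw [e2] at h2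
    have h3 := parallelogram_law_with_norm ℝ u (x - y)
    rw [hu] at h3
    have h4 : ‖x - y‖ = 0 := by
      nlinarith [norm_nonneg (x - y), norm_nonneg (u + (x - y)), norm_nonneg (u - (x - y))]
    exact (sub_eq_zero.1 (norm_eq_zero.1 h4)).symm
  have horth : ∀ w : E3, ‖w‖ = 1 → ⟪u, w⟫ = 0 → ⟪w, x - p⟫ = 0 := by
    intro w hw huw
    obtain ⟨y, hy, hyu, h⟩ := exists_pair hK hp hwidth hu hw huw
    rwa [huniq y hy hyu] at h
  have hd : (x - p) - ⟪u, x - p⟫ • u = 0 := by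
    by_contra hd
    have hud : ⟪u, (x - p) - ⟪u, x - p⟫ • u⟫ = 0 := by
      rw [inner_sub_right, real_inner_smul_right, real_inner_self_eq_norm_sq, hu]
      ring
    have h1 := horth _ (norm_smul_inv_norm hd) (by rw [real_inner_smul_right, hud, mul_zero])
    have hn := norm_ne_zero_iff.2 hd
    have h2 : ⟪(x - p) - ⟪u, x - p⟫ • u, x - p⟫ = 0 := by
      rw [real_inner_smul_left] at h1
      exact (mul_eq_zero.1 h1).resolve_left (inv_ne_zero hn)
    apply hd
    rw [← inner_self_eq_zero (𝕜 := ℝ), inner_sub_right, h2, real_inner_smul_right,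
      real_inner_comm u, hud]
    ring
  have hxe : x = p + ⟪u, x - p⟫ • u := by
    rw [← sub_eq_zero.1 hd]; abel
  refine ⟨⟪u, x - p⟫, by rw [← hxe]; exact hx, ?_⟩
  rw [sub_smul, one_smul, ← add_sub_assoc, ← hxe]
  exact hxu

/-- A point of `K` on the line `p + ℝ u` whose translate by `-u` is also in `K` bounds `K` in
both directions `±u`. -/
lemma inner_bounds (hK : IsCompact K)
    (hwidth : ∀ w : E3, ‖w‖ = 1 → HasConstWidthIn (planeEq w ⟪w, p⟫ ∩ K) w 1)
    {u : E3} (hu : ‖u‖ = 1) {r : ℝ} (h1 : p + r • u ∈ K) (h2 : p + (r - 1) • u ∈ K)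
    {z : E3} (hz : z ∈ K) : ⟪z - p, u⟫ ≤ r ∧ r - 1 ≤ ⟪z - p, u⟫ := by
  have huu : ⟪u, u⟫ = 1 := by rw [real_inner_self_eq_norm_sq, hu]; norm_num
  constructor
  · have h3 := dist_le_one hK hwidth hz h2
    have h4 := real_inner_le_norm (z - (p + (r - 1) • u)) u
    rw [← sub_sub, inner_sub_left, real_inner_smul_left, huu, sub_sub, hu] at h4
    linarith
  · have h3 := dist_le_one hK hwidth h1 hz
    have h4 := real_inner_le_norm ((p + r • u) - z) u
    rw [show (p + r • u) - z = r • u - (z - p) by abel, inner_sub_left, real_inner_smul_left, huu,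
      show r • u - (z - p) = (p + r • u) - z by abel, hu] at h4
    linarith

end Body

/-- If every 2-dimensional plane section of `K` through the interior point `p` has
constant width `1`, then `K` is the closed ball of diameter `1` centered at `p`. -/
theorem stmt_10 (K : Set E3)
    (hKcpt : IsCompact K) (hKconv : Convex ℝ K) (hKint : (interior K).Nonempty)
    (p : E3) (hp : p ∈ interior K)
    (hwidth : ∀ w : E3, ‖w‖ = 1 →
      HasConstWidthIn (planeEq w ⟪w, p⟫ ∩ K) w 1) :
    K = Metric.closedBall p (1 / 2) := by
  have hpK : p ∈ K := interior_subset hp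
  have hex : ∀ u : E3, ∃ r : ℝ, ‖u‖ = 1 → p + r • u ∈ K ∧ p + (r - 1) • u ∈ K := by
    intro u
    by_cases hu : ‖u‖ = 1
    · obtain ⟨r, hr⟩ := exists_radial hKcpt hpK hwidth u hu
      exact ⟨r, fun _ => hr⟩
    · exact ⟨0, fun h => absurd h hu⟩
  choose r hr using hex
  have hb : ∀ u : E3, ‖u‖ = 1 → ∀ z ∈ K, ⟪z - p, u⟫ ≤ r u ∧ r u - 1 ≤ ⟪z - p, u⟫ :=
    fun u hu z hz => inner_bounds hKcpt hwidth hu (hr u hu).1 (hr u hu).2 hz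
  have h01 : ∀ u : E3, ‖u‖ = 1 → 0 ≤ r u ∧ r u ≤ 1 := by
    intro u hu
    have := hb u hu p hpK
    rw [sub_self, inner_zero_left] at this
    exact ⟨this.1, by linarith [this.2]⟩
  have hrr : ∀ u v : E3, ‖u‖ = 1 → ‖v‖ = 1 → r v * ⟪v, u⟫ ≤ r u := by
    intro u v hu hv
    have := (hb u hu _ (hr v hv).1).1
    rwa [add_sub_cancel_left, real_inner_smul_left] at this
  have hneg : ∀ u : E3, ‖u‖ = 1 → r (-u) = 1 - r u := by
    intro u hu
    have hu' : ‖-u‖ = 1 := by rwa [norm_neg]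
    have huu : ⟪u, u⟫ = 1 := by rw [real_inner_self_eq_norm_sq, hu]; norm_num
    have h1 := (hb u hu _ (hr _ hu').1).2
    have h2 := (hb _ hu' _ (hr u hu).2).1
    rw [add_sub_cancel_left, real_inner_smul_left, inner_neg_left, huu] at h1
    rw [add_sub_cancel_left, real_inner_smul_left, inner_neg_right, huu] at h2
    linarith
  have hhalf : ∀ u : E3, ‖u‖ = 1 → r u = 1 / 2 := by
    intro u hu
    obtain ⟨b, hbn, hbu, -⟩ := exists_unit_orthogonal u u
    have hub : ⟪u, b⟫ = 0 := by rw [real_inner_comm]; exact hbu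
    have huu : ⟪u, u⟫ = 1 := by rw [real_inner_self_eq_norm_sq, hu]; norm_num
    have hbb : ⟪b, b⟫ = 1 := by rw [real_inner_self_eq_norm_sq, hbn]; norm_num
    -- the great circle through `u` and `b`, joining `u` to `-u`
    set c : ℝ → E3 := fun t => Real.cos t • u + Real.sin t • b with hc
    have hin : ∀ s t, ⟪c s, c t⟫ = Real.cos (s - t) := by
      intro s t
      simp only [hc, inner_add_left, inner_add_right, real_inner_smul_left, real_inner_smul_right,
        hub, hbu, huu, hbb, Real.cos_sub]
      ring
    have hcn : ∀ t, ‖c t‖ = 1 := by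
      intro t
      have h := hin t t
      rw [real_inner_self_eq_norm_sq, sub_self, Real.cos_zero] at h
      nlinarith [norm_nonneg (c t)]
    have hone : ∀ s t, r (c s) - r (c t) ≤ (s - t) ^ 2 := by
      intro s t
      have h1 := hrr (c t) (c s) (hcn t) (hcn s)
      rw [hin] at h1
      have h2 := Real.one_sub_sq_div_two_le_cos (x := s - t)
      have h3 := h01 _ (hcn s)
      nlinarith [sq_nonneg (s - t)]
    have hconst := const_of_sq_bound (fun t => r (c t)) (fun s t => abs_le.2
      ⟨by have := hone t s; nlinarith, hone s t⟩) 0 Real.pi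
    have h0 : c 0 = u := by simp [hc]
    have hpi : c Real.pi = -u := by simp [hc]
    simp only [h0, hpi] at hconst
    have := hneg u hu
    linarith
  ext x
  rw [mem_closedBall, dist_eq_norm]
  by_cases hx : x - p = 0
  · have : x = p := sub_eq_zero.1 hx
    subst this
    simp [hpK]
  have hn : 0 < ‖x - p‖ := norm_pos_iff.2 hx
  have hu : ‖‖x - p‖⁻¹ • (x - p)‖ = 1 := norm_smul_inv_norm hx
  constructor
  · intro hxK
    have h := (hb _ hu x hxK).1
    rw [hhalf _ hu, real_inner_smul_right, real_inner_self_eq_norm_sq] at h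
    have e : ‖x - p‖⁻¹ * ‖x - p‖ ^ 2 = ‖x - p‖ := by field_simp
    rwa [e] at h
  · intro hle
    have h := (hr _ hu).1
    rw [hhalf _ hu] at h
    -- `x` lies on the segment from `p` to the boundary point in its direction
    have h2 := hKconv.add_smul_sub_mem hpK h (t := 2 * ‖x - p‖) ⟨by linarith, by linarith⟩
    rw [add_sub_cancel_left, smul_smul, smul_smul] at h2
    rwa [show 2 * ‖x - p‖ * (1 / 2) * ‖x - p‖⁻¹ = 1 by field_simp, one_smul,
      add_sub_cancel] at h2
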